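/- Let L be a 3-dimensional complex ω-Lie algebra with ω not identically zero (a nontrivial, i.e. non-Lie, ω-Lie algebra). Then L is isomorphic to one of the following ω-Lie algebras, each given on a basis {x,y,z} with all unlisted values of ω on basis pairs equal to 0: L₁ ([x,y] = y, [x,z] = 0, [y,z] = z, ω(x,y) = 1); L₂ ([x,y] = 0, [x,z] = y, [y,z] = z, ω(x,z) = 1); A_α ([x,y] = x, [x,z] = x+y, [y,z] = z+αx, ω(y,z) = −1) for some α ∈ ℂ; B ([x,y] = y, [x,z] = y+z, [y,z] = x, ω(y,z) = 2); or C_α ([x,y] = y, [x,z] = αz, [y,z] = x, ω(y,z) = 1+α) for some nonzero α ∈ ℂ. -/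

import Mathlib

/-- The bracket of `L₁` on `ℂ³`: bilinear extension of `[x,y] = y`, `[x,z] = 0`,
`[y,z] = z` on the standard basis `x = e₀, y = e₁, z = e₂`. -/
def brL1 (u v : Fin 3 → ℂ) : Fin 3 → ℂ :=
  ![0, u 0 * v 1 - u 1 * v 0, u 1 * v 2 - u 2 * v 1]

/-- The form of `L₁`: bilinear extension of `ω(x,y) = 1`, `ω(x,z) = ω(y,z) = 0`. -/
def omL1 (u v : Fin 3 → ℂ) : ℂ := u 0 * v 1 - u 1 * v 0

/-- The bracket of `L₂` on `ℂ³`: bilinear extension of `[x,y] = 0`, `[x,z] = y`,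
`[y,z] = z`. -/
def brL2 (u v : Fin 3 → ℂ) : Fin 3 → ℂ :=
  ![0, u 0 * v 2 - u 2 * v 0, u 1 * v 2 - u 2 * v 1]

/-- The form of `L₂`: bilinear extension of `ω(x,z) = 1`, `ω(x,y) = ω(y,z) = 0`. -/
def omL2 (u v : Fin 3 → ℂ) : ℂ := u 0 * v 2 - u 2 * v 0

/-- The bracket of `A_α` on `ℂ³`: bilinear extension of `[x,y] = x`, `[x,z] = x + y`,
`[y,z] = z + α x`. -/
def brA (α : ℂ) (u v : Fin 3 → ℂ) : Fin 3 → ℂ :=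
  ![(u 0 * v 1 - u 1 * v 0) + (u 0 * v 2 - u 2 * v 0) + α * (u 1 * v 2 - u 2 * v 1),
    u 0 * v 2 - u 2 * v 0, u 1 * v 2 - u 2 * v 1]

/-- The form of `A_α`: bilinear extension of `ω(x,y) = ω(x,z) = 0`, `ω(y,z) = -1`. -/
def omA (u v : Fin 3 → ℂ) : ℂ := -(u 1 * v 2 - u 2 * v 1)

/-- The bracket of `B` on `ℂ³`: bilinear extension of `[x,y] = y`, `[x,z] = y + z`,
`[y,z] = x`. -/
def brB (u v : Fin 3 → ℂ) : Fin 3 → ℂ :=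
  ![u 1 * v 2 - u 2 * v 1, (u 0 * v 1 - u 1 * v 0) + (u 0 * v 2 - u 2 * v 0),
    u 0 * v 2 - u 2 * v 0]

/-- The form of `B`: bilinear extension of `ω(x,y) = ω(x,z) = 0`, `ω(y,z) = 2`. -/
def omB (u v : Fin 3 → ℂ) : ℂ := 2 * (u 1 * v 2 - u 2 * v 1)

/-- The bracket of `C_α` on `ℂ³`: bilinear extension of `[x,y] = y`, `[x,z] = α z`,
`[y,z] = x`. -/
def brC (α : ℂ) (u v : Fin 3 → ℂ) : Fin 3 → ℂ :=
  ![u 1 * v 2 - u 2 * v 1, u 0 * v 1 - u 1 * v 0, α * (u 0 * v 2 - u 2 * v 0)]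

/-- The form of `C_α`: bilinear extension of `ω(x,y) = ω(x,z) = 0`, `ω(y,z) = 1 + α`. -/
def omC (α : ℂ) (u v : Fin 3 → ℂ) : ℂ := (1 + α) * (u 1 * v 2 - u 2 * v 1)

/-- `(L, bracket, ω)` is isomorphic, as an ω-Lie algebra, to the ω-Lie algebra on `ℂ³`
with bracket `br'` and form `ω'`: there is a linear bijection intertwining the brackets
and the bilinear forms. -/
def IsOmegaLieIsoTo {L : Type*} [AddCommGroup L] [Module ℂ L]
    (bracket : L →ₗ[ℂ] L →ₗ[ℂ] L) (ω : L →ₗ[ℂ] L →ₗ[ℂ] ℂ)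
    (br' : (Fin 3 → ℂ) → (Fin 3 → ℂ) → (Fin 3 → ℂ))
    (ω' : (Fin 3 → ℂ) → (Fin 3 → ℂ) → ℂ) : Prop :=
  ∃ f : L ≃ₗ[ℂ] (Fin 3 → ℂ),
    (∀ a b : L, f (bracket a b) = br' (f a) (f b)) ∧
    (∀ a b : L, ω' (f a) (f b) = ω a b)

structure OL {L : Type*} [AddCommGroup L] [Module ℂ L]
    (br : L →ₗ[ℂ] L →ₗ[ℂ] L) (ω : L →ₗ[ℂ] L →ₗ[ℂ] ℂ) : Prop where
  anti : ∀ a b : L, br a b = - br b a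
  skew : ∀ a b : L, ω a b = - ω b a
  jac : ∀ a b c : L,
      br (br a b) c + br (br b c) a + br (br c a) b
        = ω a b • c + ω b c • a + ω c a • b
  dim : Module.finrank ℂ L = 3

def LI3 {L : Type*} [AddCommGroup L] [Module ℂ L] (x y z : L) : Prop :=
  ∀ a b c : ℂ, a • x + b • y + c • z = 0 → a = 0 ∧ b = 0 ∧ c = 0

def Concl {L : Type*} [AddCommGroup L] [Module ℂ L]
    (bracket : L →ₗ[ℂ] L →ₗ[ℂ] L) (ω : L →ₗ[ℂ] L →ₗ[ℂ] ℂ) : Prop :=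
    IsOmegaLieIsoTo bracket ω brL1 omL1 ∨
      IsOmegaLieIsoTo bracket ω brL2 omL2 ∨
      (∃ α : ℂ, IsOmegaLieIsoTo bracket ω (brA α) omA) ∨
      IsOmegaLieIsoTo bracket ω brB omB ∨
      (∃ α : ℂ, α ≠ 0 ∧ IsOmegaLieIsoTo bracket ω (brC α) (omC α))

theorem LI3.basis {L : Type*} [AddCommGroup L] [Module ℂ L] [FiniteDimensional ℂ L]
    {x y z : L} (h : LI3 x y z) (hd : Module.finrank ℂ L = 3) :
    ∃ b : Module.Basis (Fin 3) ℂ L, b 0 = x ∧ b 1 = y ∧ b 2 = z := by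
  have hli : LinearIndependent ℂ ![x, y, z] := by
    rw [Fintype.linearIndependent_iff]
    intro g hg
    simp [Fin.sum_univ_three] at hg
    obtain ⟨h0, h1, h2⟩ := h _ _ _ hg
    intro i
    fin_cases i <;> assumption
  refine ⟨basisOfLinearIndependentOfCardEqFinrank hli (by simp [hd]), ?_, ?_, ?_⟩ <;> simp

theorem LI3.span {L : Type*} [AddCommGroup L] [Module ℂ L] [FiniteDimensional ℂ L]
    {x y z : L} (h : LI3 x y z) (hd : Module.finrank ℂ L = 3) (v : L) :
    ∃ a b c : ℂ, v = a • x + b • y + c • z := by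
  obtain ⟨b, rfl, rfl, rfl⟩ := h.basis hd
  refine ⟨b.repr v 0, b.repr v 1, b.repr v 2, ?_⟩
  conv_lhs => rw [← b.sum_repr v, Fin.sum_univ_three]

section
variable {L : Type*} [AddCommGroup L] [Module ℂ L]
    {br : L →ₗ[ℂ] L →ₗ[ℂ] L} {ω : L →ₗ[ℂ] L →ₗ[ℂ] ℂ}

theorem OL.self (h : OL br ω) (a : L) : br a a = 0 := by
  have := h.anti a a
  have h2 : (2 : ℂ) • br a a = 0 := by
    rw [two_smul]
    nth_rewrite 1 [this]
    simp
  simpa using h2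

theorem OL.oself (h : OL br ω) (a : L) : ω a a = 0 := by
  have := h.skew a a
  exact self_eq_neg.mp this

theorem OL.expand (h : OL br ω) (x y z : L) (a b c a' b' c' : ℂ) :
    br (a • x + b • y + c • z) (a' • x + b' • y + c' • z) =
      (a * b' - b * a') • br x y + (a * c' - c * a') • br x z + (b * c' - c * b') • br y z := by
  simp only [map_add, map_smul, LinearMap.add_apply, LinearMap.smul_apply, h.self]
  rw [h.anti y x, h.anti z x, h.anti z y]
  module

theorem OL.oexpand (h : OL br ω) (x y z : L) (a b c a' b' c' : ℂ) :
    ω (a • x + b • y + c • z) (a' • x + b' • y + c' • z) =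
      (a * b' - b * a') * ω x y + (a * c' - c * a') * ω x z + (b * c' - c * b') * ω y z := by
  simp only [map_add, map_smul, LinearMap.add_apply, LinearMap.smul_apply, h.oself, smul_eq_mul]
  rw [h.skew y x, h.skew z x, h.skew z y]
  ring

theorem OL.struct (h : OL br ω) {x y z : L} (hl : LI3 x y z)
    {p0 p1 p2 q0 q1 q2 r0 r1 r2 : ℂ}
    (hp : br x y = p0 • x + p1 • y + p2 • z)
    (hq : br x z = q0 • x + q1 • y + q2 • z)
    (hr : br y z = r0 • x + r1 • y + r2 • z) :
    ω y z = (p0-r2)*q0+(p1+q2)*r0-(r1+q0)*p0 ∧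
    ω x z = -((p0-r2)*q1+(p1+q2)*r1-(r1+q0)*p1) ∧
    ω x y = (p0-r2)*q2+(p1+q2)*r2-(r1+q0)*p2 := by
  have hj := h.jac x y z
  rw [h.anti z x, h.skew z x, hp, hq, hr] at hj
  simp only [map_add, map_smul, map_neg, LinearMap.neg_apply, LinearMap.add_apply,
    LinearMap.smul_apply, h.self] at hj
  rw [h.anti y x, h.anti z x, h.anti z y, hp, hq, hr] at hj
  have := hl ((p0-r2)*q0+(p1+q2)*r0-(r1+q0)*p0 - ω y z)
    ((p0-r2)*q1+(p1+q2)*r1-(r1+q0)*p1 + ω x z)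
    ((p0-r2)*q2+(p1+q2)*r2-(r1+q0)*p2 - ω x y) (by
      rw [← sub_eq_zero] at hj
      rw [← hj]
      module)
  obtain ⟨h1, h2, h3⟩ := this
  refine ⟨?_, ?_, ?_⟩
  · linear_combination -h1
  · linear_combination h2
  · linear_combination -h3

theorem OL.mk_iso [FiniteDimensional ℂ L] (h : OL br ω) {x y z : L} (hl : LI3 x y z)
    {p0 p1 p2 q0 q1 q2 r0 r1 r2 : ℂ}
    (hp : br x y = p0 • x + p1 • y + p2 • z)
    (hq : br x z = q0 • x + q1 • y + q2 • z)
    (hr : br y z = r0 • x + r1 • y + r2 • z)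
    {br' : (Fin 3 → ℂ) → (Fin 3 → ℂ) → (Fin 3 → ℂ)}
    {ω' : (Fin 3 → ℂ) → (Fin 3 → ℂ) → ℂ}
    (h0 : ∀ u v, br' u v 0 = (u 0 * v 1 - u 1 * v 0) * p0 + (u 0 * v 2 - u 2 * v 0) * q0
      + (u 1 * v 2 - u 2 * v 1) * r0)
    (h1 : ∀ u v, br' u v 1 = (u 0 * v 1 - u 1 * v 0) * p1 + (u 0 * v 2 - u 2 * v 0) * q1
      + (u 1 * v 2 - u 2 * v 1) * r1)
    (h2 : ∀ u v, br' u v 2 = (u 0 * v 1 - u 1 * v 0) * p2 + (u 0 * v 2 - u 2 * v 0) * q2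
      + (u 1 * v 2 - u 2 * v 1) * r2)
    (h3 : ∀ u v, ω' u v = (u 0 * v 1 - u 1 * v 0) * ((p0-r2)*q2+(p1+q2)*r2-(r1+q0)*p2)
      + (u 0 * v 2 - u 2 * v 0) * (-((p0-r2)*q1+(p1+q2)*r1-(r1+q0)*p1))
      + (u 1 * v 2 - u 2 * v 1) * ((p0-r2)*q0+(p1+q2)*r0-(r1+q0)*p0)) :
    IsOmegaLieIsoTo br ω br' ω' := by
  obtain ⟨o1, o2, o3⟩ := h.struct hl hp hq hr
  obtain ⟨b, rfl, rfl, rfl⟩ := hl.basis h.dim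
  have key : ∀ v, v = b.equivFun v 0 • b 0 + b.equivFun v 1 • b 1 + b.equivFun v 2 • b 2 := by
    intro v
    conv_lhs => rw [← b.sum_equivFun v]
    simp only [Fin.sum_univ_three]
  refine ⟨b.equivFun, ?_, ?_⟩
  · intro u v
    conv_lhs => rw [key u, key v, h.expand, hp, hq, hr]
    ext i
    fin_cases i
    · simp [h0]
    · simp [h1]
    · simp [h2]
  · intro u v
    conv_rhs => rw [key u, key v, h.oexpand, o1, o2, o3]
    rw [h3]

theorem isoL1 [FiniteDimensional ℂ L] (h : OL br ω) {x y z : L} (hl : LI3 x y z)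
    (hp : br x y = y) (hq : br x z = 0) (hr : br y z = z) : Concl br ω := by
  left
  refine h.mk_iso (p0 := 0) (p1 := 1) (p2 := 0) (q0 := 0) (q1 := 0) (q2 := 0) (r0 := 0) (r1 := 0)
    (r2 := 1) hl (by rw [hp]; module) (by rw [hq]; module) (by rw [hr]; module) ?_ ?_ ?_ ?_ <;>
  intro u v <;> simp [brL1, omL1] <;> try ring

theorem isoL2 [FiniteDimensional ℂ L] (h : OL br ω) {x y z : L} (hl : LI3 x y z)
    (hp : br x y = 0) (hq : br x z = y) (hr : br y z = z) : Concl br ω := by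
  right; left
  refine h.mk_iso (p0 := 0) (p1 := 0) (p2 := 0) (q0 := 0) (q1 := 1) (q2 := 0) (r0 := 0) (r1 := 0)
    (r2 := 1) hl (by rw [hp]; module) (by rw [hq]; module) (by rw [hr]; module) ?_ ?_ ?_ ?_ <;>
  intro u v <;> simp [brL2, omL2] <;> try ring

theorem isoA [FiniteDimensional ℂ L] (h : OL br ω) {x y z : L} (hl : LI3 x y z) (α : ℂ)
    (hp : br x y = x) (hq : br x z = x + y) (hr : br y z = z + α • x) : Concl br ω := by
  right; right; left
  refine ⟨α, ?_⟩
  refine h.mk_iso (p0 := 1) (p1 := 0) (p2 := 0) (q0 := 1) (q1 := 1) (q2 := 0) (r0 := α) (r1 := 0)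
    (r2 := 1) hl (by rw [hp]; module) (by rw [hq]; module) (by rw [hr]; module) ?_ ?_ ?_ ?_ <;>
  intro u v <;> simp [brA, omA] <;> try ring

theorem isoB [FiniteDimensional ℂ L] (h : OL br ω) {x y z : L} (hl : LI3 x y z)
    (hp : br x y = y) (hq : br x z = y + z) (hr : br y z = x) : Concl br ω := by
  right; right; right; left
  refine h.mk_iso (p0 := 0) (p1 := 1) (p2 := 0) (q0 := 0) (q1 := 1) (q2 := 1) (r0 := 1) (r1 := 0)
    (r2 := 0) hl (by rw [hp]; module) (by rw [hq]; module) (by rw [hr]; module) ?_ ?_ ?_ ?_ <;>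
  intro u v <;> simp [brB, omB] <;> try ring

theorem isoC [FiniteDimensional ℂ L] (h : OL br ω) {x y z : L} (hl : LI3 x y z) (α : ℂ)
    (hα : α ≠ 0)
    (hp : br x y = y) (hq : br x z = α • z) (hr : br y z = x) : Concl br ω := by
  right; right; right; right
  refine ⟨α, hα, ?_⟩
  refine h.mk_iso (p0 := 0) (p1 := 1) (p2 := 0) (q0 := 0) (q1 := 0) (q2 := α) (r0 := 1) (r1 := 0)
    (r2 := 0) hl (by rw [hp]; module) (by rw [hq]; module) (by rw [hr]; module) ?_ ?_ ?_ ?_ <;>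
  intro u v <;> simp [brC, omC] <;> try ring

theorem LI3.change {x y z : L} (hl : LI3 x y z) {x' y' z' : L}
    (a0 a1 a2 b0 b1 b2 c0 c1 c2 : ℂ)
    (hx : x' = a0 • x + a1 • y + a2 • z) (hy : y' = b0 • x + b1 • y + b2 • z)
    (hz : z' = c0 • x + c1 • y + c2 • z)
    (hd : a0 * (b1 * c2 - b2 * c1) - a1 * (b0 * c2 - b2 * c0) + a2 * (b0 * c1 - b1 * c0) ≠ 0) :
    LI3 x' y' z' := by
  intro a b c h
  subst hx hy hz
  obtain ⟨e0, e1, e2⟩ := hl (a * a0 + b * b0 + c * c0) (a * a1 + b * b1 + c * c1)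
    (a * a2 + b * b2 + c * c2) (by rw [← h]; module)
  refine ⟨?_, ?_, ?_⟩ <;> apply (mul_eq_zero.mp _).resolve_right hd
  · linear_combination (b1 * c2 - b2 * c1) * e0 - (b0 * c2 - b2 * c0) * e1
      + (b0 * c1 - b1 * c0) * e2
  · linear_combination -(a1 * c2 - a2 * c1) * e0 + (a0 * c2 - a2 * c0) * e1
      - (a0 * c1 - a1 * c0) * e2
  · linear_combination (a1 * b2 - a2 * b1) * e0 - (a0 * b2 - a2 * b0) * e1
      + (a0 * b1 - a1 * b0) * e2

/-- diagonal case -/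
theorem caseDiag [FiniteDimensional ℂ L] (h : OL br ω) {x y z : L} (hl : LI3 x y z)
    {α r : ℂ} (hr0 : r ≠ 0)
    (hp : br x y = y) (hq : br x z = α • z) (hr : br y z = r • x) : Concl br ω := by
  by_cases hα : α = 0
  · subst hα
    have hyx : br y x = - y := by rw [h.anti, hp]
    have hzx : br z x = 0 := by rw [h.anti, hq]; simp
    have hzy : br z y = - (r • x) := by rw [h.anti, hr]
    refine isoL2 (x := (-r⁻¹) • z) (y := x) (z := y) h
      (hl.change 0 0 (-r⁻¹) 1 0 0 0 1 0 (by module) (by module) (by module) (by simpa using hr0))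
      ?_ ?_ ?_
    · simp [hzx]
    · simp [hzy, smul_smul, hr0]
    · exact hp
  · refine isoC (x := x) (y := r⁻¹ • y) (z := z) h
      (hl.change 1 0 0 0 r⁻¹ 0 0 0 1 (by module) (by module) (by module) (by simpa using hr0))
      α hα ?_ ?_ ?_
    · simp [hp]
    · exact hq
    · simp [hr, smul_smul, hr0]

/-- triangular case -/
theorem caseTri1 [FiniteDimensional ℂ L] (h : OL br ω) {x y z : L} (hl : LI3 x y z)
    {α E r : ℂ} (hr0 : r ≠ 0)
    (hp : br x y = y) (hq : br x z = α • z + E • y) (hr : br y z = r • x) : Concl br ω := by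
  by_cases hα : α = 1
  · subst hα
    by_cases hE : E = 0
    · subst hE
      exact caseDiag (α := 1) h hl hr0 hp (by rw [hq]; module) hr
    · obtain ⟨l, hl2⟩ := IsAlgClosed.exists_pow_nat_eq ((E * r)⁻¹) (n := 2) (by norm_num)
      have hl0 : l ≠ 0 := by
        rintro rfl
        simp at hl2
        tauto
      have hEl : l * E * l * r = 1 := by
        have : l ^ 2 * (E * r) = 1 := by rw [hl2]; field_simp
        linear_combination this
      refine isoB (x := x) (y := (l * E) • y) (z := l • z) h
        (hl.change 1 0 0 0 (l * E) 0 0 0 l (by module) (by module) (by module)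
          (by simp [hl0, hE])) ?_ ?_ ?_
      · simp [hp]
      · simp only [map_smul, hq]; module
      · simp only [map_smul, LinearMap.smul_apply, hr, smul_smul]
        rw [show l * (l * E * r) = 1 by linear_combination hEl, one_smul]
  · have hα' : α - 1 ≠ 0 := sub_ne_zero.mpr hα
    refine caseDiag (x := x) (y := y) (z := z + (E / (α - 1)) • y) (α := α) h
      (hl.change 1 0 0 0 1 0 0 (E / (α - 1)) 1 (by module) (by module) (by module)
          (by simp)) hr0 hp ?_ ?_
    · simp only [map_smul, map_add, hq, hp]
      match_scalars
      · ring
      · field_simp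
        ring
    · simp only [map_smul, map_add, hr, h.self]
      module

theorem caseTri [FiniteDimensional ℂ L] (h : OL br ω) {x y z : L} (hl : LI3 x y z)
    {lam mu E r : ℂ} (hr0 : r ≠ 0) (hlam : lam ≠ 0)
    (hp : br x y = lam • y) (hq : br x z = mu • z + E • y) (hr : br y z = r • x) :
    Concl br ω := by
  refine caseTri1 (x := lam⁻¹ • x) (y := y) (z := z) (α := lam⁻¹ * mu) (E := lam⁻¹ * E)
    (r := r * lam) h
      (hl.change lam⁻¹ 0 0 0 1 0 0 0 1 (by module) (by module) (by module)
          (by simp [hlam])) (mul_ne_zero hr0 hlam) ?_ ?_ ?_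
  · simp [hp, smul_smul, hlam]
  · simp only [map_smul, LinearMap.smul_apply, hq]; module
  · rw [hr, smul_smul]; congr 1; field_simp

theorem caseMat [FiniteDimensional ℂ L] (h : OL br ω) {x y z : L} (hl : LI3 x y z)
    {A B C D r : ℂ} (hr0 : r ≠ 0) (ht : A + D ≠ 0)
    (hp : br x y = A • y + B • z) (hq : br x z = C • y + D • z) (hr : br y z = r • x) :
    Concl br ω := by
  have hzy : br z y = - (r • x) := by rw [h.anti, hr]
  by_cases hB : B = 0
  · subst hB
    by_cases hA : A = 0
    · subst hA
      have hD : D ≠ 0 := by simpa using ht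
      refine caseTri (x := x) (y := z + (C / D) • y) (z := y) (lam := D) (mu := 0) (E := 0)
        (r := - r) h
        (hl.change 1 0 0 0 (C / D) 1 0 1 0 (by module) (by module) (by module)
          (by simp)) (neg_ne_zero.mpr hr0) hD ?_ ?_ ?_
      · simp only [map_add, map_smul, hq, hp]
        match_scalars <;> field_simp <;> ring
      · rw [hp]; module
      · simp only [map_add, map_smul, LinearMap.add_apply, LinearMap.smul_apply, hzy, h.self]
        module
    · exact caseTri (lam := A) (mu := D) (E := C) h hl hr0 hA (by rw [hp]; module)
        (by rw [hq]; module) hr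
  · obtain ⟨lam, hlam, hchar⟩ : ∃ lam : ℂ, lam ≠ 0 ∧
        lam * (lam - D) = (lam - D) * A + B * C := by
      obtain ⟨s, hs⟩ := IsAlgClosed.exists_pow_nat_eq ((A - D) ^ 2 + 4 * (B * C)) (n := 2)
        (by norm_num)
      by_cases h0 : (A + D + s) / 2 = 0
      · refine ⟨(A + D - s) / 2, ?_, by linear_combination hs / 4⟩
        intro h1
        exact ht (by linear_combination h0 + h1)
      · exact ⟨_, h0, by linear_combination hs / 4⟩
    refine caseTri (x := x) (y := (lam - D) • y + B • z) (z := y) (lam := lam)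
        (mu := A + D - lam) (E := 1) (r := - (B * r)) h
        (hl.change 1 0 0 0 (lam - D) B 0 1 0 (by module) (by module) (by module)
          (by simpa using hB)) (neg_ne_zero.mpr (mul_ne_zero hB hr0)) hlam ?_ ?_ ?_
    · simp only [map_add, map_smul, hq, hp]
      match_scalars
      · linear_combination -hchar
      · ring
    · rw [hp]; module
    · simp only [map_add, map_smul, LinearMap.add_apply, LinearMap.smul_apply, hzy, h.self]
      module

/-- traceless case, after normalisation -/
theorem caseNil [FiniteDimensional ℂ L] (h : OL br ω) {x y z : L} (hl : LI3 x y z)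
    {q C r : ℂ}
    (hp : br x y = x) (hq : br x z = q • x + C • y) (hr : br y z = r • x + (1 - q) • y + z) :
    Concl br ω := by
  have hyx : br y x = - x := by rw [h.anti, hp]
  have hzx : br z x = - (q • x + C • y) := by rw [h.anti, hq]
  have hzy : br z y = - (r • x + (1 - q) • y + z) := by rw [h.anti, hr]
  by_cases hC : C = 0
  · subst hC
    refine isoL1 (x := q • y - z) (y := -(r • x + (1 - q) • y + z)) (z := x) h
      (hl.change 0 q (-1) (-r) (-(1 - q)) (-1) 1 0 0 (by module) (by module) (by module)
          (by ring_nf; simp)) ?_ ?_ ?_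
    · simp only [map_add, map_sub, map_neg, map_smul, LinearMap.sub_apply,
        LinearMap.smul_apply, hyx, hzx, hzy, hr, h.self]
      module
    · simp only [map_sub, map_smul, LinearMap.sub_apply, LinearMap.smul_apply, hyx, hzx]
      module
    · simp only [map_add, map_neg, map_smul, LinearMap.add_apply, LinearMap.neg_apply,
        LinearMap.smul_apply, hyx, hzx, h.self]
      module
  · refine isoA (x := C⁻¹ • x) (y := y) (z := z + (1 - q) • y) (α := r * C) h
      (hl.change C⁻¹ 0 0 0 1 0 0 (1 - q) 1 (by module) (by module) (by module)
          (by simpa using hC)) ?_ ?_ ?_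
    · simp [hp]
    · simp only [map_add, map_smul, LinearMap.add_apply, LinearMap.smul_apply, hq, hp]
      match_scalars <;> field_simp
      try ring
    · simp only [map_add, map_smul, LinearMap.add_apply, LinearMap.smul_apply, hr, h.self]
      match_scalars <;> field_simp
      try ring

theorem caseN [FiniteDimensional ℂ L] (h : OL br ω) {x y z : L} (hl : LI3 x y z)
    {p q0 q1 r0 n : ℂ} (hp0 : p ≠ 0) (hn : n ≠ 0)
    (hp : br x y = p • x) (hq : br x z = q0 • x + q1 • y)
    (hr : br y z = r0 • x + (n - q0) • y + p • z) :
    Concl br ω := by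
  refine caseNil (x := x) (y := p⁻¹ • y) (z := n⁻¹ • z) (q := q0 / n) (C := q1 * p / n)
    (r := r0 / (p * n)) h
      (hl.change 1 0 0 0 p⁻¹ 0 0 0 n⁻¹ (by module) (by module) (by module)
          (by simp [hp0, hn])) ?_ ?_ ?_
  · simp [hp, smul_smul, hp0]
  · simp only [map_smul, hq]
    match_scalars <;> field_simp
  · simp only [map_smul, LinearMap.smul_apply, hr]
    match_scalars <;> field_simp

theorem caseT0 [FiniteDimensional ℂ L] (h : OL br ω) {x y z : L} (hl : LI3 x y z)
    {p0 p1 p2 q0 q1 q2 r0 r1 r2 : ℂ}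
    (hp : br x y = p0 • x + p1 • y + p2 • z)
    (hq : br x z = q0 • x + q1 • y + q2 • z)
    (hr : br y z = r0 • x + r1 • y + r2 • z)
    (hxy : ω x y = 0) (hxz : ω x z = 0) (hyz : ω y z ≠ 0)
    (ht : p1 + q2 = 0) (hm : p0 - r2 = 0) (hn : r1 + q0 ≠ 0) : Concl br ω := by
  obtain ⟨e1, e2, e3⟩ := h.struct hl hp hq hr
  rw [hxy] at e3
  rw [hxz] at e2
  rw [ht, hm] at e1 e2 e3
  have hp1 : p1 = 0 := (mul_eq_zero.mp (show (r1 + q0) * p1 = 0 by linear_combination -e2)).resolve_left hn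
  have hp2 : p2 = 0 := (mul_eq_zero.mp (show (r1 + q0) * p2 = 0 by linear_combination e3)).resolve_left hn
  have hp0 : p0 ≠ 0 := by
    rintro rfl
    apply hyz
    rw [e1]; ring
  have hq2 : q2 = 0 := by linear_combination ht - hp1
  have hr2 : r2 = p0 := by linear_combination -hm
  subst hp1 hp2 hq2 hr2
  refine caseN (q0 := q0) (q1 := q1) (r0 := r0) h hl hp0 hn (by rw [hp]; module)
    (by rw [hq]; module) (by rw [hr]; module)

theorem caseGen [FiniteDimensional ℂ L] (h : OL br ω) {x y z : L} (hl : LI3 x y z)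
    (hxy : ω x y = 0) (hxz : ω x z = 0) (hyz : ω y z ≠ 0) : Concl br ω := by
  obtain ⟨p0, p1, p2, hp⟩ := hl.span h.dim (br x y)
  obtain ⟨q0, q1, q2, hq⟩ := hl.span h.dim (br x z)
  obtain ⟨r0, r1, r2, hr⟩ := hl.span h.dim (br y z)
  obtain ⟨e1, e2, e3⟩ := h.struct hl hp hq hr
  rw [hxy] at e3
  rw [hxz] at e2
  by_cases ht : p1 + q2 = 0
  · by_cases hn : r1 + q0 = 0
    · have hm : p0 - r2 ≠ 0 := by
        intro hm
        apply hyz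
        rw [e1, ht, hn, hm]; ring
      refine caseT0 (x := x) (y := z) (z := y) (p0 := q0) (p1 := q2) (p2 := q1)
        (q0 := p0) (q1 := p2) (q2 := p1) (r0 := -r0) (r1 := -r2) (r2 := -r1) h
        (hl.change 1 0 0 0 0 1 0 1 0 (by module) (by module) (by module) (by simp))
        (by rw [hq]; module) (by rw [hp]; module) (by rw [h.anti, hr]; module)
        hxz hxy (by rw [h.skew]; simpa using hyz) (by linear_combination ht)
        (by linear_combination hn) (by intro hh; apply hm; linear_combination hh)
    · obtain ⟨k, hk⟩ : ∃ k : ℂ, p0 - r2 + k * (r1 + q0) = 0 :=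
        ⟨-(p0 - r2) / (r1 + q0), by field_simp; ring⟩
      refine caseT0 (x := x) (y := y + k • z) (z := z) (p0 := p0 + k * q0) (p1 := p1 + k * q1)
        (p2 := p2 + k * q2 - k * (p1 + k * q1))
        (q0 := q0) (q1 := q1) (q2 := q2 - k * q1) (r0 := r0) (r1 := r1) (r2 := r2 - k * r1) h
        (hl.change 1 0 0 0 1 k 0 0 1 (by module) (by module) (by module) (by simp))
        ?_ ?_ ?_ ?_ hxz ?_ (by linear_combination ht) (by linear_combination hk) hn
      · simp only [map_add, map_smul, hp, hq]; module
      · rw [hq]; module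
      · simp only [map_add, map_smul, LinearMap.add_apply, LinearMap.smul_apply, h.self, hr]
        module
      · simp [hxy, hxz]
      · simpa [h.oself] using hyz
  · obtain ⟨η, hη⟩ : ∃ η : ℂ, (p1 + q2) * η = r2 - p0 := ⟨(r2 - p0) / (p1 + q2), by field_simp⟩
    obtain ⟨ζ, hζ⟩ : ∃ ζ : ℂ, (p1 + q2) * ζ = -(q0 + r1) := ⟨-(q0 + r1) / (p1 + q2), by field_simp⟩
    have c1 : p0 + p1 * η + p2 * ζ = 0 := by
      apply (mul_eq_zero.mp _).resolve_left ht
      linear_combination p1 * hη + p2 * hζ - e3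
    have c2 : q0 + q1 * η + q2 * ζ = 0 := by
      apply (mul_eq_zero.mp _).resolve_left ht
      linear_combination q1 * hη + q2 * hζ - e2
    have d1 : r1 - η * q1 + ζ * p1 = 0 := by
      apply (mul_eq_zero.mp _).resolve_left ht
      linear_combination -q1 * hη + p1 * hζ + e2
    have d2 : r2 - η * q2 + ζ * p2 = 0 := by
      apply (mul_eq_zero.mp _).resolve_left ht
      linear_combination -q2 * hη + p2 * hζ - e3
    have d0 : (p1 + q2) * (r0 - η * q0 + ζ * p0) = ω y z := by
      linear_combination -q0 * hη + p0 * hζ - e1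
    have hyx : br y x = - (p0 • x + p1 • y + p2 • z) := by rw [h.anti, hp]
    refine caseMat (x := x) (y := y - η • x) (z := z - ζ • x) (A := p1) (B := p2) (C := q1)
      (D := q2) (r := r0 - η * q0 + ζ * p0) h
      (hl.change 1 0 0 (-η) 1 0 (-ζ) 0 1 (by module) (by module) (by module) (by simp))
      ?_ ht ?_ ?_ ?_
    · intro h0
      apply hyz
      rw [← d0, h0, mul_zero]
    · simp only [map_sub, map_smul, hp, h.self]
      match_scalars <;> first | ring1 | linear_combination c1
    · simp only [map_sub, map_smul, hq, h.self]
      match_scalars <;> first | ring1 | linear_combination c2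
    · simp only [map_sub, map_smul, LinearMap.sub_apply, LinearMap.smul_apply, hq, hr, hyx, h.self]
      match_scalars
      · ring
      · linear_combination d1
      · linear_combination d2

theorem caseAll [FiniteDimensional ℂ L] (h : OL br ω) (hω : ¬ ∀ a b : L, ω a b = 0) :
    Concl br ω := by
  push Not at hω
  obtain ⟨y, z, hyz⟩ := hω
  have hk : LinearMap.ker ((ω y).prod (ω z)) ≠ ⊥ := by
    apply LinearMap.ker_ne_bot_of_finrank_lt
    simp [h.dim]
  obtain ⟨x, hx, hx0⟩ := Submodule.exists_mem_ne_zero_of_ne_bot hk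
  simp at hx
  obtain ⟨h1, h2⟩ := hx
  have hxy : ω x y = 0 := by rw [h.skew, h1, neg_zero]
  have hxz : ω x z = 0 := by rw [h.skew, h2, neg_zero]
  refine caseGen (x := x) h ?_ hxy hxz hyz
  intro a b c e
  have f1 := congrArg (fun t => ω t z) e
  have f2 := congrArg (fun t => ω y t) e
  simp [h.oself, hxz, h1, hyz] at f1 f2
  subst f1 f2
  simp [hx0] at e
  exact ⟨e, rfl, rfl⟩
end

/-- Main theorem.
Every 3-dimensional complex ω-Lie algebra with `ω` not identically zero is isomorphic
to one of `L₁`, `L₂`, `A_α` (`α ∈ ℂ`), `B`, or `C_α` (`0 ≠ α ∈ ℂ`). -/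
theorem omega_lie_complex_classification
    {L : Type*} [AddCommGroup L] [Module ℂ L] [FiniteDimensional ℂ L]
    (bracket : L →ₗ[ℂ] L →ₗ[ℂ] L) (ω : L →ₗ[ℂ] L →ₗ[ℂ] ℂ)
    (hanti : ∀ a b : L, bracket a b = - bracket b a)
    (hskew : ∀ a b : L, ω a b = - ω b a)
    (hjac : ∀ a b c : L,
      bracket (bracket a b) c + bracket (bracket b c) a + bracket (bracket c a) b
        = ω a b • c + ω b c • a + ω c a • b)
    (hdim : Module.finrank ℂ L = 3)
    (hω : ¬ ∀ a b : L, ω a b = 0) :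
    IsOmegaLieIsoTo bracket ω brL1 omL1 ∨
      IsOmegaLieIsoTo bracket ω brL2 omL2 ∨
      (∃ α : ℂ, IsOmegaLieIsoTo bracket ω (brA α) omA) ∨
      IsOmegaLieIsoTo bracket ω brB omB ∨
      (∃ α : ℂ, α ≠ 0 ∧ IsOmegaLieIsoTo bracket ω (brC α) (omC α)) := by
  exact caseAll ⟨hanti, hskew, hjac, hdim⟩ hω
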